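/- arXiv:2403.03827 — 7 statements merged into one kernel-verified Lean document; each statement's English description precedes it below -/
import Mathlib

section
/- Let f : ℝⁿ → ℝ, let τ > 0, and let r : ℝⁿ → ℝ be separable, r(x) = Σᵢ rᵢ(xᵢ), where each rᵢ : ℝ → ℝ is convex, satisfies rᵢ(0) = 0, and rᵢ(t) ≥ 0 for all t ≥ 0. Define g(y,z) = f(y − z) + τ·Σᵢ(yᵢ + zᵢ) + r(y) + r(−z). If (y*, z*) minimizes g over the set {(y,z) : y ≥ 0, z ≥ 0}, then yᵢ* zᵢ* = 0 for every i = 1,…,n. -/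
/-- Lemma 1 (complementarity part): if `(y*, z*)` minimizes
`g(y,z) = f(y-z) + τ·Σᵢ(yᵢ+zᵢ) + r(y) + r(-z)` over `{(y,z) : y ≥ 0, z ≥ 0}`,
where `r(x) = Σᵢ rᵢ(xᵢ)` with each `rᵢ` convex, `rᵢ(0) = 0`, `rᵢ(t) ≥ 0` for `t ≥ 0`,
then `yᵢ* zᵢ* = 0` for all `i`. -/
theorem stmt_0 (n : ℕ) (f : (Fin n → ℝ) → ℝ) (τ : ℝ) (hτ : 0 < τ)
    (r : Fin n → ℝ → ℝ)
    (hconv : ∀ i, ConvexOn ℝ Set.univ (r i))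
    (hzero : ∀ i, r i 0 = 0)
    (hnonneg : ∀ i (t : ℝ), 0 ≤ t → 0 ≤ r i t)
    (g : (Fin n → ℝ) → (Fin n → ℝ) → ℝ)
    (hg : ∀ y z, g y z =
      f (y - z) + τ * (∑ i, (y i + z i)) + (∑ i, r i (y i)) + (∑ i, r i (-(z i))))
    (ystar zstar : Fin n → ℝ)
    (hy : ∀ i, 0 ≤ ystar i) (hz : ∀ i, 0 ≤ zstar i)
    (hmin : ∀ y z : Fin n → ℝ, (∀ i, 0 ≤ y i) → (∀ i, 0 ≤ z i) →
      g ystar zstar ≤ g y z) :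
    ∀ i, ystar i * zstar i = 0 := by
  intro i
  by_contra hne
  have ha : 0 < ystar i := lt_of_le_of_ne (hy i) (fun h => hne (by rw [← h, zero_mul]))
  have hb : 0 < zstar i := lt_of_le_of_ne (hz i) (fun h => hne (by rw [← h, mul_zero]))
  obtain ⟨m, hm, hma, hmb⟩ : ∃ m : ℝ, 0 < m ∧ m ≤ ystar i ∧ m ≤ zstar i :=
    ⟨min (ystar i) (zstar i), lt_min ha hb, min_le_left _ _, min_le_right _ _⟩
  have key : r i (ystar i - m) + r i (-(zstar i - m)) ≤ r i (ystar i) + r i (-(zstar i)) := by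
    have hab : 0 < ystar i + zstar i := by linarith
    obtain ⟨s, hs⟩ : ∃ s : ℝ, s = m / (ystar i + zstar i) := ⟨_, rfl⟩
    have hsm : s * (ystar i + zstar i) = m := by rw [hs]; field_simp
    have hs0 : 0 ≤ s := by rw [hs]; positivity
    have hs1 : 0 ≤ 1 - s := by
      rw [hs, sub_nonneg, div_le_one hab]; linarith
    have h1 := (hconv i).2 (Set.mem_univ (ystar i)) (Set.mem_univ (-(zstar i))) hs1 hs0 (by ring)
    have h2 := (hconv i).2 (Set.mem_univ (ystar i)) (Set.mem_univ (-(zstar i))) hs0 hs1 (by ring)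
    simp only [smul_eq_mul] at h1 h2
    have e1 : (1 - s) * ystar i + s * -(zstar i) = ystar i - m := by rw [← hsm]; ring
    have e2 : s * ystar i + (1 - s) * -(zstar i) = -(zstar i - m) := by rw [← hsm]; ring
    rw [e1] at h1
    rw [e2] at h2
    linarith
  have h := hmin (fun j => if j = i then ystar j - m else ystar j)
    (fun j => if j = i then zstar j - m else zstar j)
    (fun j => by
      by_cases hj : j = i
      · subst hj; simpa using hma
      · simpa [hj] using hy j)
    (fun j => by
      by_cases hj : j = i
      · subst hj; simpa using hmb
      · simpa [hj] using hz j)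
  rw [hg, hg] at h
  have hd : ((fun j => if j = i then ystar j - m else ystar j) -
      (fun j => if j = i then zstar j - m else zstar j)) = ystar - zstar := by
    funext j
    by_cases hj : j = i <;> simp [hj]
  rw [hd] at h
  simp only [add_assoc, Finset.mul_sum, ← Finset.sum_add_distrib] at h
  refine absurd (le_of_add_le_add_left h) (not_le.mpr ?_)
  apply Finset.sum_lt_sum
  · intro j _
    by_cases hj : j = i
    · subst hj
      simp only [if_true]
      nlinarith [mul_pos hτ hm]
    · simp [hj]
  · refine ⟨i, Finset.mem_univ i, ?_⟩
    simp only [if_true]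
    nlinarith [mul_pos hτ hm]
end

section
/- Let f : ℝⁿ → ℝ, let τ > 0, and let r : ℝⁿ → ℝ be separable, r(x) = Σᵢ rᵢ(xᵢ), where each rᵢ : ℝ → ℝ is convex, satisfies rᵢ(0) = 0, and rᵢ(t) ≥ 0 for all t ≥ 0. Define g(y,z) = f(y − z) + τ·Σᵢ(yᵢ + zᵢ) + r(y) + r(−z). If (y*, z*) minimizes g over the set {(y,z) : y ≥ 0, z ≥ 0}, then x* := y* − z* minimizes f(x) + τ‖x‖₁ + r(x) over all x ∈ ℝⁿ. -/
theorem aux_conv (r : ℝ → ℝ) (hc : ConvexOn ℝ Set.univ r) (h0 : r 0 = 0) (y z : ℝ)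
    (hy : 0 ≤ y) (hz : 0 ≤ z) : r (y - z) ≤ r y + r (-z) := by
  rcases (add_nonneg hy hz).eq_or_lt with h | h
  · have h1 : y = 0 := by linarith
    have h2 : z = 0 := by linarith
    subst h1 h2
    simp [h0]
  · have ha : 0 ≤ y / (y + z) := by positivity
    have hb : 0 ≤ z / (y + z) := by positivity
    have hab : y / (y + z) + z / (y + z) = 1 := by field_simp
    have h1 := hc.2 (Set.mem_univ y) (Set.mem_univ (-z)) ha hb hab
    have h2 := hc.2 (Set.mem_univ y) (Set.mem_univ (-z)) hb ha (by rw [add_comm]; exact hab)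
    simp only [smul_eq_mul] at h1 h2
    have e1 : y / (y + z) * y + z / (y + z) * (-z) = y - z := by field_simp; ring
    have e2 : z / (y + z) * y + y / (y + z) * (-z) = 0 := by field_simp; ring
    rw [e1] at h1
    rw [e2, h0] at h2
    have e3 : r y + r (-z) = (y / (y + z) + z / (y + z)) * (r y + r (-z)) := by rw [hab, one_mul]
    rw [e3]
    linarith

/-- Lemma 1 (minimization part): if `(y*, z*)` minimizes
`g(y,z) = f(y-z) + τ·Σᵢ(yᵢ+zᵢ) + r(y) + r(-z)` over `{(y,z) : y ≥ 0, z ≥ 0}`,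
where `r(x) = Σᵢ rᵢ(xᵢ)` with each `rᵢ` convex, `rᵢ(0) = 0`, `rᵢ(t) ≥ 0` for `t ≥ 0`,
then `x* := y* - z*` minimizes `f(x) + τ‖x‖₁ + r(x)` over `ℝⁿ`. -/
theorem stmt_1 (n : ℕ) (f : (Fin n → ℝ) → ℝ) (τ : ℝ) (hτ : 0 < τ)
    (r : Fin n → ℝ → ℝ)
    (hconv : ∀ i, ConvexOn ℝ Set.univ (r i))
    (hzero : ∀ i, r i 0 = 0)
    (hnonneg : ∀ i (t : ℝ), 0 ≤ t → 0 ≤ r i t)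
    (g : (Fin n → ℝ) → (Fin n → ℝ) → ℝ)
    (hg : ∀ y z, g y z =
      f (y - z) + τ * (∑ i, (y i + z i)) + (∑ i, r i (y i)) + (∑ i, r i (-(z i))))
    (F : (Fin n → ℝ) → ℝ)
    (hF : ∀ x, F x = f x + τ * (∑ i, |x i|) + (∑ i, r i (x i)))
    (ystar zstar : Fin n → ℝ)
    (hy : ∀ i, 0 ≤ ystar i) (hz : ∀ i, 0 ≤ zstar i)
    (hmin : ∀ y z : Fin n → ℝ, (∀ i, 0 ≤ y i) → (∀ i, 0 ≤ z i) →
      g ystar zstar ≤ g y z) :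
    ∀ x : Fin n → ℝ, F (ystar - zstar) ≤ F x := by
  intro x
  have h1 : F (ystar - zstar) ≤ g ystar zstar := by
    rw [hF, hg]
    have a : ∑ i, |(ystar - zstar) i| ≤ ∑ i, (ystar i + zstar i) := by
      refine Finset.sum_le_sum fun i _ => ?_
      rw [Pi.sub_apply, abs_le]
      constructor <;> linarith [hy i, hz i]
    have b : ∑ i, r i ((ystar - zstar) i) ≤ ∑ i, r i (ystar i) + ∑ i, r i (-(zstar i)) := by
      rw [← Finset.sum_add_distrib]
      exact Finset.sum_le_sum fun i _ => aux_conv (r i) (hconv i) (hzero i) _ _ (hy i) (hz i)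
    have c := mul_le_mul_of_nonneg_left a hτ.le
    linarith
  have h2 : g (fun i => max (x i) 0) (fun i => max (-x i) 0) = F x := by
    rw [hF, hg, add_assoc (f _ + _), ← Finset.sum_add_distrib]
    congr 1
    · congr 1
      · congr 1
        ext i
        rcases le_total 0 (x i) with h | h <;> simp [h]
      · congr 1
        refine Finset.sum_congr rfl fun i _ => ?_
        rcases le_total 0 (x i) with h | h <;> simp [h, abs_of_nonneg, abs_of_nonpos]
    · refine Finset.sum_congr rfl fun i _ => ?_
      rcases le_total 0 (x i) with h | h <;> simp [h, hzero]
  rw [← h2]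
  exact h1.trans (hmin _ _ (fun i => le_max_right _ _) (fun i => le_max_right _ _))
end

section
/- Let f : ℝⁿ → ℝ, let τ > 0, and let r : ℝⁿ → ℝ be separable, r(x) = Σᵢ rᵢ(xᵢ), where each rᵢ : ℝ → ℝ is convex, satisfies rᵢ(0) = 0, rᵢ(t) ≥ 0 for all t ≥ 0, and is symmetric, i.e., rᵢ(t) = rᵢ(−t) for all t ∈ ℝ. Define g̃(y,z) = f(y − z) + τ·Σᵢ(yᵢ + zᵢ) + r(y) + r(z). If (y*, z*) minimizes g̃ over the set {(y,z) : y ≥ 0, z ≥ 0}, then yᵢ* zᵢ* = 0 for every i, and x* := y* − z* minimizes f(x) + τ‖x‖₁ + r(x) over all x ∈ ℝⁿ. -/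
/-- Symmetric-`rᵢ` variant of Lemma 1: with each `rᵢ` convex, `rᵢ(0) = 0`,
`rᵢ(t) ≥ 0` for `t ≥ 0`, and `rᵢ(t) = rᵢ(-t)`, if `(y*, z*)` minimizes
`g̃(y,z) = f(y-z) + τ·Σᵢ(yᵢ+zᵢ) + r(y) + r(z)` over `{(y,z) : y ≥ 0, z ≥ 0}`,
then `yᵢ* zᵢ* = 0` for all `i`, and `x* := y* - z*` minimizes
`f(x) + τ‖x‖₁ + r(x)` over `ℝⁿ`. -/
theorem stmt_2 (n : ℕ) (f : (Fin n → ℝ) → ℝ) (τ : ℝ) (hτ : 0 < τ)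
    (r : Fin n → ℝ → ℝ)
    (hconv : ∀ i, ConvexOn ℝ Set.univ (r i))
    (hzero : ∀ i, r i 0 = 0)
    (hnonneg : ∀ i (t : ℝ), 0 ≤ t → 0 ≤ r i t)
    (hsymm : ∀ i (t : ℝ), r i t = r i (-t))
    (gt : (Fin n → ℝ) → (Fin n → ℝ) → ℝ)
    (hgt : ∀ y z, gt y z =
      f (y - z) + τ * (∑ i, (y i + z i)) + (∑ i, r i (y i)) + (∑ i, r i (z i)))
    (F : (Fin n → ℝ) → ℝ)
    (hF : ∀ x, F x = f x + τ * (∑ i, |x i|) + (∑ i, r i (x i)))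
    (ystar zstar : Fin n → ℝ)
    (hy : ∀ i, 0 ≤ ystar i) (hz : ∀ i, 0 ≤ zstar i)
    (hmin : ∀ y z : Fin n → ℝ, (∀ i, 0 ≤ y i) → (∀ i, 0 ≤ z i) →
      gt ystar zstar ≤ gt y z) :
    (∀ i, ystar i * zstar i = 0) ∧ (∀ x : Fin n → ℝ, F (ystar - zstar) ≤ F x) := by
  have mono : ∀ i (s t : ℝ), |s| ≤ t → r i s ≤ r i t := by
    intro i s t h
    have h' := abs_le.mp h
    have := (hconv i).le_max_of_mem_Icc (Set.mem_univ (-t)) (Set.mem_univ t)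
      (Set.mem_Icc.mpr h')
    rwa [← hsymm i t, max_self] at this
  have term : ∀ i (y z : ℝ), 0 ≤ y → 0 ≤ z →
      r i (y - z) ≤ r i y + r i z := by
    intro i y z h1 h2
    rcases le_total z y with h | h
    · have := mono i (y - z) y (by rw [abs_of_nonneg] <;> linarith)
      linarith [hnonneg i z h2]
    · have := mono i (y - z) z (by rw [abs_of_nonpos] <;> linarith)
      linarith [hnonneg i y h1]
  have habs : ∀ y z : ℝ, 0 ≤ y → 0 ≤ z → |y - z| ≤ y + z := by
    intro y z h1 h2
    rw [abs_le]; constructor <;> linarith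
  have split : ∀ x, gt (fun i => max (x i) 0) (fun i => max (-x i) 0) = F x := by
    intro x
    have e1 : (fun i => max (x i) 0) - (fun i => max (-x i) 0) = x := by
      funext i
      simp only [Pi.sub_apply]
      rcases le_total (x i) 0 with h | h
      · rw [max_eq_right h, max_eq_left (by linarith)]; ring
      · rw [max_eq_left h, max_eq_right (by linarith)]; ring
    rw [hgt, hF, e1, add_assoc, ← Finset.sum_add_distrib]
    congr 1
    · congr 2
      refine Finset.sum_congr rfl fun i _ => ?_
      rcases le_total (x i) 0 with h | h
      · rw [max_eq_right h, max_eq_left (by linarith), abs_of_nonpos h]; ring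
      · rw [max_eq_left h, max_eq_right (by linarith), abs_of_nonneg h]; ring
    · refine Finset.sum_congr rfl fun i _ => ?_
      rcases le_total (x i) 0 with h | h
      · rw [max_eq_right h, max_eq_left (by linarith), hzero, ← hsymm]; ring
      · rw [max_eq_left h, max_eq_right (by linarith), hzero]; ring
  have key : ∀ x, gt ystar zstar ≤ F x := fun x => by
    rw [← split x]
    exact hmin _ _ (fun i => le_max_right _ _) (fun i => le_max_right _ _)
  have hr : ∑ i, r i ((ystar - zstar) i) ≤ ∑ i, r i (ystar i) + ∑ i, r i (zstar i) := by
    rw [← Finset.sum_add_distrib]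
    exact Finset.sum_le_sum fun i _ => term i _ _ (hy i) (hz i)
  have ha : ∀ i ∈ Finset.univ, |(ystar - zstar) i| ≤ ystar i + zstar i :=
    fun i _ => habs _ _ (hy i) (hz i)
  have hs := Finset.sum_le_sum ha
  constructor
  · have h := key (ystar - zstar)
    rw [hgt, hF] at h
    have h2 : ∑ i, (ystar i + zstar i) ≤ ∑ i, |(ystar - zstar) i| :=
      le_of_mul_le_mul_left (by linarith) hτ
    have h3 := (Finset.sum_eq_sum_iff_of_le ha).mp (le_antisymm hs h2)
    intro i
    have h4 := h3 i (Finset.mem_univ i)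
    simp only [Pi.sub_apply] at h4
    have h5 : (ystar i - zstar i) ^ 2 = (ystar i + zstar i) ^ 2 := by rw [← h4, sq_abs]
    nlinarith
  · intro x
    refine le_trans ?_ (key x)
    rw [hgt, hF]
    have := mul_le_mul_of_nonneg_left hs hτ.le
    linarith
end

section
/- Let f : ℝⁿ → ℝ, let ε > 0, and let r : ℝⁿ → ℝ be convex, symmetric with respect to each variable, i.e., r(x − 2xᵢeᵢ) = r(x) for all x ∈ ℝⁿ and all i, and increasing on the positive orthant, i.e., r(x₀ + γeᵢ) ≥ r(x₀) for all x₀ ∈ ℝⁿ with x₀ ≥ 0, all γ ≥ 0, and all i. Define g(y,z) = f(y − z) + r(y + z) + ε·Σᵢ(yᵢ + zᵢ). If (y*, z*) minimizes g over the set {(y,z) : y ≥ 0, z ≥ 0}, then yᵢ* zᵢ* = 0 for every i = 1,…,n. -/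
/-- Lemma 2 (complementarity part): let `r : ℝⁿ → ℝ` be convex, symmetric with
respect to each variable (`r(x - 2xᵢeᵢ) = r(x)`), and increasing on the positive
orthant (`r(x₀ + γeᵢ) ≥ r(x₀)` for `x₀ ≥ 0`, `γ ≥ 0`). If `(y*, z*)` minimizes
`g(y,z) = f(y-z) + r(y+z) + ε·Σᵢ(yᵢ+zᵢ)` over `{(y,z) : y ≥ 0, z ≥ 0}`,
then `yᵢ* zᵢ* = 0` for all `i`. -/
theorem stmt_5 (n : ℕ) (f : (Fin n → ℝ) → ℝ) (ε : ℝ) (hε : 0 < ε)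
    (r : (Fin n → ℝ) → ℝ)
    (hconv : ConvexOn ℝ Set.univ r)
    (hsymm : ∀ (x : Fin n → ℝ) (i : Fin n),
      r (x - (2 * x i) • (Pi.single i 1 : Fin n → ℝ)) = r x)
    (hincr : ∀ (x₀ : Fin n → ℝ), (∀ j, 0 ≤ x₀ j) → ∀ (γ : ℝ), 0 ≤ γ →
      ∀ (i : Fin n), r x₀ ≤ r (x₀ + γ • (Pi.single i 1 : Fin n → ℝ)))
    (g : (Fin n → ℝ) → (Fin n → ℝ) → ℝ)
    (hg : ∀ y z, g y z = f (y - z) + r (y + z) + ε * (∑ i, (y i + z i)))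
    (ystar zstar : Fin n → ℝ)
    (hy : ∀ i, 0 ≤ ystar i) (hz : ∀ i, 0 ≤ zstar i)
    (hmin : ∀ y z : Fin n → ℝ, (∀ i, 0 ≤ y i) → (∀ i, 0 ≤ z i) →
      g ystar zstar ≤ g y z) :
    ∀ i, ystar i * zstar i = 0 := by
  intro i
  by_contra hne
  have hyi : 0 < ystar i := lt_of_le_of_ne (hy i) (fun h => hne (by rw [← h, zero_mul]))
  have hzi : 0 < zstar i := lt_of_le_of_ne (hz i) (fun h => hne (by rw [← h, mul_zero]))
  obtain ⟨m, hm, hmy, hmz⟩ : ∃ m : ℝ, 0 < m ∧ m ≤ ystar i ∧ m ≤ zstar i :=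
    ⟨min (ystar i) (zstar i), lt_min hyi hzi, min_le_left _ _, min_le_right _ _⟩
  let e : Fin n → ℝ := Pi.single i 1
  have key : ∀ u : Fin n → ℝ, (∀ j, 0 ≤ u j) → m ≤ u i → ∀ j, 0 ≤ (u - m • e) j := by
    intro u hu hui j
    by_cases h : j = i
    · subst h
      simpa [e] using hui
    · simpa [e, h] using hu j
  have hy' := key ystar hy hmy
  have hz' := key zstar hz hmz
  have h1 := hmin _ _ hy' hz'
  rw [hg, hg] at h1
  have h2 : (ystar - m • e) - (zstar - m • e) = ystar - zstar := by abel
  have h3 := hincr ((ystar - m • e) + (zstar - m • e))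
    (fun j => add_nonneg (hy' j) (hz' j)) (2 * m) (by positivity) i
  have h4 : (ystar - m • e) + (zstar - m • e) + (2 * m) • (Pi.single i 1 : Fin n → ℝ)
      = ystar + zstar := by
    change (ystar - m • e) + (zstar - m • e) + (2 * m) • e = _
    module
  rw [h4] at h3
  have he : ∑ j, e j = 1 := by simp [e]
  have h5 : ∑ j, ((ystar - m • e) j + (zstar - m • e) j)
      = ∑ j, (ystar j + zstar j) - 2 * m := by
    have : ∀ j, (ystar - m • e) j + (zstar - m • e) j
        = (ystar j + zstar j) - 2 * m * e j := by
      intro j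
      simp only [Pi.sub_apply, Pi.smul_apply, smul_eq_mul]
      ring
    rw [Finset.sum_congr rfl (fun j _ => this j), Finset.sum_sub_distrib,
      ← Finset.mul_sum, he, mul_one]
  rw [h2, h5] at h1
  nlinarith [mul_pos hε hm]
end

section
/- Let f : ℝⁿ → ℝ, let ε > 0, and let r : ℝⁿ → ℝ be convex, symmetric with respect to each variable, i.e., r(x − 2xᵢeᵢ) = r(x) for all x ∈ ℝⁿ and all i, and increasing on the positive orthant, i.e., r(x₀ + γeᵢ) ≥ r(x₀) for all x₀ ∈ ℝⁿ with x₀ ≥ 0, all γ ≥ 0, and all i. Define g(y,z) = f(y − z) + r(y + z) + ε·Σᵢ(yᵢ + zᵢ). If (y*, z*) minimizes g over the set {(y,z) : y ≥ 0, z ≥ 0}, then x* := y* − z* minimizes f(x) + r(x) + ε‖x‖₁ over all x ∈ ℝⁿ. -/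
/-- Lemma 2 (minimization part): let `r : ℝⁿ → ℝ` be convex, symmetric with
respect to each variable (`r(x - 2xᵢeᵢ) = r(x)`), and increasing on the positive
orthant (`r(x₀ + γeᵢ) ≥ r(x₀)` for `x₀ ≥ 0`, `γ ≥ 0`). If `(y*, z*)` minimizes
`g(y,z) = f(y-z) + r(y+z) + ε·Σᵢ(yᵢ+zᵢ)` over `{(y,z) : y ≥ 0, z ≥ 0}`,
then `x* := y* - z*` minimizes `f(x) + r(x) + ε‖x‖₁` over `ℝⁿ`. -/
theorem stmt_6 (n : ℕ) (f : (Fin n → ℝ) → ℝ) (ε : ℝ) (hε : 0 < ε)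
    (r : (Fin n → ℝ) → ℝ)
    (hconv : ConvexOn ℝ Set.univ r)
    (hsymm : ∀ (x : Fin n → ℝ) (i : Fin n),
      r (x - (2 * x i) • (Pi.single i 1 : Fin n → ℝ)) = r x)
    (hincr : ∀ (x₀ : Fin n → ℝ), (∀ j, 0 ≤ x₀ j) → ∀ (γ : ℝ), 0 ≤ γ →
      ∀ (i : Fin n), r x₀ ≤ r (x₀ + γ • (Pi.single i 1 : Fin n → ℝ)))
    (g : (Fin n → ℝ) → (Fin n → ℝ) → ℝ)
    (hg : ∀ y z, g y z = f (y - z) + r (y + z) + ε * (∑ i, (y i + z i)))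
    (ystar zstar : Fin n → ℝ)
    (hy : ∀ i, 0 ≤ ystar i) (hz : ∀ i, 0 ≤ zstar i)
    (hmin : ∀ y z : Fin n → ℝ, (∀ i, 0 ≤ y i) → (∀ i, 0 ≤ z i) →
      g ystar zstar ≤ g y z) :
    ∀ x : Fin n → ℝ,
      f (ystar - zstar) + r (ystar - zstar) + ε * (∑ i, |ystar i - zstar i|) ≤
      f x + r x + ε * (∑ i, |x i|) := by
  have habs : ∀ x : Fin n → ℝ, r (fun i => |x i|) = r x := by
    intro x
    have key : ∀ s : Finset (Fin n), r (fun i => if i ∈ s then |x i| else x i) = r x := by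
      intro s
      induction s using Finset.induction_on with
      | empty => simp
      | insert a s ha ih =>
        rw [← ih]
        by_cases hx : 0 ≤ x a
        · congr 1
          funext i
          by_cases hi : i = a
          · subst hi
            simp [ha, abs_of_nonneg hx]
          · simp [hi]
        · rw [← hsymm (fun i => if i ∈ s then |x i| else x i) a]
          congr 1
          funext i
          by_cases hi : i = a
          · subst hi
            simp [ha, abs_of_neg (not_le.mp hx)]
            ring
          · simp [hi, ha]
    simpa using key Finset.univ
  have hmono : ∀ a b : Fin n → ℝ, (∀ i, 0 ≤ a i) → (∀ i, a i ≤ b i) → r a ≤ r b := by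
    intro a b ha hab
    have key : ∀ s : Finset (Fin n), r a ≤ r (fun i => if i ∈ s then b i else a i) := by
      intro s
      induction s using Finset.induction_on with
      | empty => simp
      | insert c s hc ih =>
        refine ih.trans ?_
        have h := hincr (fun i => if i ∈ s then b i else a i)
          (fun j => by
            by_cases hj : j ∈ s
            · simpa [hj] using (ha j).trans (hab j)
            · simpa [hj] using ha j) (b c - a c) (sub_nonneg.mpr (hab c)) c
        refine h.trans (le_of_eq ?_)
        congr 1
        funext i
        by_cases hi : i = c
        · subst hi
          simp [hc]
        · simp [hi]
    simpa using key Finset.univ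
  intro x
  have h1 := hmin (fun i => max (x i) 0) (fun i => max (-x i) 0)
    (fun i => le_max_right _ _) (fun i => le_max_right _ _)
  have e1 : ((fun i => max (x i) 0) - (fun i => max (-x i) 0) : Fin n → ℝ) = x := by
    funext i
    exact max_zero_sub_eq_self (x i)
  have e3 : ∀ i, max (x i) 0 + max (-x i) 0 = |x i| := by
    intro i
    rcases le_total 0 (x i) with h | h
    · simp [h, abs_of_nonneg h]
    · simp [h, abs_of_nonpos h]
  have e2 : ((fun i => max (x i) 0) + (fun i => max (-x i) 0) : Fin n → ℝ)
      = fun i => |x i| := by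
    funext i
    exact e3 i
  rw [hg, hg, e1, e2, habs] at h1
  simp only [e3] at h1
  have hle : ∀ i, |ystar i - zstar i| ≤ ystar i + zstar i := by
    intro i
    rw [abs_le]
    constructor <;> linarith [hy i, hz i]
  have h2 : r (ystar - zstar) ≤ r (ystar + zstar) := by
    rw [← habs (ystar - zstar)]
    exact hmono _ _ (fun i => abs_nonneg _) hle
  have h3 := mul_le_mul_of_nonneg_left
    (Finset.sum_le_sum (fun i (_ : i ∈ Finset.univ) => hle i)) hε.le
  linarith
end

section
/- Let f : ℝⁿ → ℝ, let τ_g > 0 and ε > 0, and let J₁,…,J_{n_g} ⊆ {1,…,n} be index sets defining the group-Lasso penalty G(x) = Σᵢ₌₁^{n_g} ‖x_{Jᵢ}‖₂. If (y*, z*) minimizes f(y − z) + ε·Σᵢ(yᵢ + zᵢ) + τ_g·G(y + z) over the set {(y,z) : y ≥ 0, z ≥ 0}, then x* := y* − z* minimizes f(x) + ε‖x‖₁ + τ_g·G(x) over all x ∈ ℝⁿ. -/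
/-- Corollary 2 (group-Lasso): let `G(x) = Σᵢ ‖x_{Jᵢ}‖₂` be the group-Lasso
penalty defined by index sets `J₁,…,J_{n_g}`. If `(y*, z*)` minimizes
`f(y-z) + ε·Σᵢ(yᵢ+zᵢ) + τ_g·G(y+z)` over `{(y,z) : y ≥ 0, z ≥ 0}`,
then `x* := y* - z*` minimizes `f(x) + ε‖x‖₁ + τ_g·G(x)` over `ℝⁿ`. -/
theorem stmt_7 (n ng : ℕ) (f : (Fin n → ℝ) → ℝ) (τg ε : ℝ)
    (hτg : 0 < τg) (hε : 0 < ε)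
    (J : Fin ng → Finset (Fin n))
    (G : (Fin n → ℝ) → ℝ)
    (hG : ∀ x, G x = ∑ i, Real.sqrt (∑ j ∈ J i, (x j) ^ 2))
    (ystar zstar : Fin n → ℝ)
    (hy : ∀ i, 0 ≤ ystar i) (hz : ∀ i, 0 ≤ zstar i)
    (hmin : ∀ y z : Fin n → ℝ, (∀ i, 0 ≤ y i) → (∀ i, 0 ≤ z i) →
      f (ystar - zstar) + ε * (∑ i, (ystar i + zstar i)) + τg * G (ystar + zstar) ≤
      f (y - z) + ε * (∑ i, (y i + z i)) + τg * G (y + z)) :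
    ∀ x : Fin n → ℝ,
      f (ystar - zstar) + ε * (∑ i, |ystar i - zstar i|) + τg * G (ystar - zstar) ≤
      f x + ε * (∑ i, |x i|) + τg * G x := by
  intro x
  have h := hmin (fun i => max (x i) 0) (fun i => max (-x i) 0)
    (fun i => le_max_right _ _) (fun i => le_max_right _ _)
  have e1 : ((fun i => max (x i) 0) - (fun i => max (-x i) 0) : Fin n → ℝ) = x := by
    funext i
    simp only [Pi.sub_apply]
    rcases le_total 0 (x i) with hx | hx
    · rw [max_eq_left hx, max_eq_right (by linarith)]; ring
    · rw [max_eq_right hx, max_eq_left (by linarith)]; ring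
  have e2 : ∀ i, max (x i) 0 + max (-x i) 0 = |x i| := by
    intro i
    rcases le_total 0 (x i) with hx | hx
    · rw [max_eq_left hx, max_eq_right (by linarith), abs_of_nonneg hx]; ring
    · rw [max_eq_right hx, max_eq_left (by linarith), abs_of_nonpos hx]; ring
  have e3 : G ((fun i => max (x i) 0) + (fun i => max (-x i) 0)) = G x := by
    rw [hG, hG]
    simp only [Pi.add_apply, e2, sq_abs]
  rw [e1, e3] at h
  simp only [e2] at h
  have k1 : ∑ i, |ystar i - zstar i| ≤ ∑ i, (ystar i + zstar i) := by
    apply Finset.sum_le_sum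
    intro i _
    rw [abs_le]
    constructor <;> linarith [hy i, hz i]
  have k2 : G (ystar - zstar) ≤ G (ystar + zstar) := by
    rw [hG, hG]
    apply Finset.sum_le_sum
    intro i _
    apply Real.sqrt_le_sqrt
    apply Finset.sum_le_sum
    intro j _
    simp only [Pi.add_apply, Pi.sub_apply]
    nlinarith [mul_nonneg (hy j) (hz j)]
  have k3 := mul_le_mul_of_nonneg_left k1 hε.le
  have k4 := mul_le_mul_of_nonneg_left k2 hτg.le
  linarith
end

section
/- Let f : ℝⁿ → ℝ, let τ > 0, and let I ⊆ {1,…,n} be a set of indices with complement I^c. Consider the split problem in the variables (w, y_I, z_I), where w ∈ ℝ^{I^c} collects the components of x with indices outside I and y_I, z_I ∈ ℝ^{I} with y_I, z_I ≥ 0: minimize f(x(w, y_I − z_I)) + τ·Σ_{i∈I}((y_I)ᵢ + (z_I)ᵢ), where x(w, v) ∈ ℝⁿ denotes the vector whose components on I^c equal w and whose components on I equal v. If (w*, y_I*, z_I*) is a minimizer of this split problem, then (y_I*)ᵢ (z_I*)ᵢ = 0 for every i ∈ I, and the vector x* := x(w*, y_I* − z_I*) minimizes f(x) + τ·Σ_{i∈I}|xᵢ|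 over all x ∈ ℝⁿ. -/
/-- Partial-splitting extension of Lemma 1: only the subvector `x_I` enters the
`ℓ₁`-term. Writing `X w v ∈ ℝⁿ` for the vector whose components on `Iᶜ` equal
`w` and whose components on `I` equal `v`, if `(w*, y_I*, z_I*)` minimizes
`f(X(w, y_I - z_I)) + τ·Σ_{i∈I}((y_I)ᵢ + (z_I)ᵢ)` over `y_I, z_I ≥ 0`, then
`(y_I*)ᵢ (z_I*)ᵢ = 0` for all `i ∈ I` and `x* := X(w*, y_I* - z_I*)` minimizes
`f(x) + τ·Σ_{i∈I}|xᵢ|` over `ℝⁿ`. -/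
theorem stmt_16 (n : ℕ) (f : (Fin n → ℝ) → ℝ) (τ : ℝ) (hτ : 0 < τ)
    (I : Finset (Fin n))
    (X : ({i : Fin n // i ∉ I} → ℝ) → ({i : Fin n // i ∈ I} → ℝ) → (Fin n → ℝ))
    (hX : ∀ w v (j : Fin n),
      X w v j = if h : j ∈ I then v ⟨j, h⟩ else w ⟨j, h⟩)
    (wstar : {i : Fin n // i ∉ I} → ℝ) (ystar zstar : {i : Fin n // i ∈ I} → ℝ)
    (hy : ∀ i, 0 ≤ ystar i) (hz : ∀ i, 0 ≤ zstar i)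
    (hmin : ∀ (w : {i : Fin n // i ∉ I} → ℝ) (y z : {i : Fin n // i ∈ I} → ℝ),
      (∀ i, 0 ≤ y i) → (∀ i, 0 ≤ z i) →
      f (X wstar (ystar - zstar)) + τ * (∑ i, (ystar i + zstar i)) ≤
      f (X w (y - z)) + τ * (∑ i, (y i + z i))) :
    (∀ i, ystar i * zstar i = 0) ∧
    (∀ x : Fin n → ℝ,
      f (X wstar (ystar - zstar)) + τ * (∑ i ∈ I, |X wstar (ystar - zstar) i|) ≤
      f x + τ * (∑ i ∈ I, |x i|)) := by
  have hsum : ∀ g : Fin n → ℝ, ∑ i ∈ I, g i = ∑ i : {i : Fin n // i ∈ I}, g i.1 := by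
    intro g
    exact Finset.sum_subtype I (fun _ => Iff.rfl) g
  have key : ∀ x : Fin n → ℝ,
      f (X wstar (ystar - zstar)) + τ * (∑ i, (ystar i + zstar i)) ≤
      f x + τ * (∑ i ∈ I, |x i|) := by
    intro x
    have h := hmin (fun j => x j.1) (fun j => max (x j.1) 0) (fun j => max (-(x j.1)) 0)
      (fun _ => le_max_right _ _) (fun _ => le_max_right _ _)
    have e1 : X (fun j => x j.1)
        ((fun j => max (x j.1) 0) - (fun j => max (-(x j.1)) 0)) = x := by
      funext j
      rw [hX]
      split_ifs with hj
      · simp only [Pi.sub_apply]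
        rcases le_total (x j) 0 with h0 | h0
        · rw [max_eq_right h0, max_eq_left (by linarith)]; ring
        · rw [max_eq_left h0, max_eq_right (by linarith)]; ring
      · rfl
    have e2 : ∑ i : {i : Fin n // i ∈ I}, (max (x i.1) 0 + max (-(x i.1)) 0)
        = ∑ i ∈ I, |x i| := by
      rw [hsum (fun i => |x i|)]
      refine Finset.sum_congr rfl fun j _ => ?_
      rcases le_total (x j.1) 0 with h0 | h0
      · rw [max_eq_right h0, max_eq_left (by linarith), abs_of_nonpos h0]; ring
      · rw [max_eq_left h0, max_eq_right (by linarith), abs_of_nonneg h0]; ring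
    rw [e1, e2] at h
    exact h
  have hXs : ∑ i ∈ I, |X wstar (ystar - zstar) i| = ∑ i, |ystar i - zstar i| := by
    rw [hsum (fun i => |X wstar (ystar - zstar) i|)]
    refine Finset.sum_congr rfl fun j _ => ?_
    rw [hX, dif_pos j.2]
    rfl
  have hle : ∀ i, |ystar i - zstar i| ≤ ystar i + zstar i := fun i =>
    abs_le.mpr ⟨by linarith [hy i, hz i], by linarith [hy i, hz i]⟩
  have hsl : ∑ i, |ystar i - zstar i| ≤ ∑ i, (ystar i + zstar i) :=
    Finset.sum_le_sum fun i _ => hle i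
  refine ⟨fun i => ?_, fun x => ?_⟩
  · have h := key (X wstar (ystar - zstar))
    rw [hXs] at h
    have h2 : ∑ i, (ystar i + zstar i) ≤ ∑ i, |ystar i - zstar i| :=
      le_of_mul_le_mul_left (by linarith) hτ
    have h3 := (Finset.sum_eq_sum_iff_of_le (fun i _ => hle i)).mp (le_antisymm hsl h2) i
      (Finset.mem_univ i)
    have h4 := sq_abs (ystar i - zstar i)
    rw [h3] at h4
    nlinarith
  · rw [hXs]
    have := mul_le_mul_of_nonneg_left hsl hτ.le
    linarith [key x]
end
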